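/- There exists a constant C > 0 such that for every real ε > 0 and every positive integer k with πεk ≤ 9/20, the Laplace slender-body PDE eigenvalue λ = 2π²εk·K₁(πεk)/K₀(πεk) and the Laplace slender-body approximation eigenvalue λ^SB = −2π/(log(πεk/2) + γ) satisfy |λ − λ^SB| ≤ C·ε²·k². -/

import Mathlib

open Real

/-- Modified Bessel function of the second kind of order `j`:
`K_j(z) = ∫₀^∞ exp (−z cosh t) * cosh (j t) dt`. -/
noncomputable def besselK (j : ℕ) (z : ℝ) : ℝ :=
  ∫ t in Set.Ioi (0 : ℝ), Real.exp (-z * Real.cosh t) * Real.cosh ((j : ℝ) * t)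

/-!
Put `L(z) = -(log (z / 2) + γ)`, so that `λ^SB = 2π / L(πεk)`, while `λ = 2π z K₁(z) / K₀(z)` with
`z = πεk`. Comparing `K₀(z)` with the exponential integral `E₁(z / 2)` gives `K₀ - L → 0` at `0⁺`,
the constant `γ` entering as `-Γ'(1)`, and one integration by parts gives `z K₁ → 1`. From these
limits one integrates the system `K₀' = -K₁`, `(z K₁)' = -z K₀` starting at `0`, alternately
improving the bounds on `K₀` and `z K₁`, until both errors `K₀ - L` and `1 - z K₁` are
`O(z² (1 + L))`. As `L ≤ K₀`, dividing by `L K₀` leaves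
`|z K₁ / K₀ - 1 / L| ≤ z² (1 + 1 / L)²` wherever `0 < L`, that is for `z < 2 exp (-γ)`.
-/

open Asymptotics Filter MeasureTheory Set Topology

lemma le_of_hasDerivAt_nonneg_of_tendsto_nhdsGT {f f' : ℝ → ℝ} {a b c : ℝ} (hab : a < b)
    (hf : ∀ x ∈ Ioc a b, HasDerivAt f (f' x) x) (hf' : ∀ x ∈ Ioo a b, 0 ≤ f' x)
    (hlim : Tendsto f (𝓝[>] a) (𝓝 c)) : c ≤ f b := by
  have hmono : MonotoneOn f (Ioc a b) := by
    refine monotoneOn_of_hasDerivWithinAt_nonneg (f' := f') (convex_Ioc a b)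
      (fun x hx => (hf x hx).continuousAt.continuousWithinAt) ?_ ?_ <;> rw [interior_Ioc]
    · exact fun x hx => (hf x (Ioo_subset_Ioc_self hx)).hasDerivWithinAt
    · exact hf'
  refine le_of_tendsto hlim ?_
  filter_upwards [Ioc_mem_nhdsGT hab] with x hx using hmono hx (right_mem_Ioc.2 hab) hx.2

section Integrability

lemma cosh_mul_isBigO_exp {b : ℝ} (hb : 0 ≤ b) :
    (fun t => cosh (b * t)) =O[atTop] fun t => exp (b * t) := by
  refine IsBigO.of_bound 1 ?_
  filter_upwards [eventually_ge_atTop 0] with t ht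
  have hbt : 0 ≤ b * t := by positivity
  have : exp (-(b * t)) ≤ exp (b * t) := exp_le_exp.2 (by linarith)
  rw [norm_of_nonneg (cosh_pos _).le, norm_of_nonneg (exp_pos _).le, cosh_eq]
  linarith

lemma sinh_mul_isBigO_exp {b : ℝ} (hb : 0 ≤ b) :
    (fun t => sinh (b * t)) =O[atTop] fun t => exp (b * t) := by
  refine (IsBigO.of_bound 1 (Eventually.of_forall fun t => ?_)).trans (cosh_mul_isBigO_exp hb)
  rw [one_mul, norm_of_nonneg (cosh_pos _).le, norm_eq_abs, abs_sinh, ← cosh_abs (b * t)]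
  exact (sinh_lt_cosh _).le

lemma exp_neg_mul_exp_isBigO {a : ℝ} (ha : 0 < a) (b : ℝ) :
    (fun t => exp (-(a * exp t))) =O[atTop] fun t => exp (-b * t) := by
  have h := (isLittleO_exp_neg_mul_rpow_atTop ha (-b)).isBigO.comp_tendsto tendsto_exp_atTop
  refine h.congr (fun t => ?_) fun t => ?_
  · simp only [Function.comp_apply, neg_mul]
  · simp only [Function.comp_apply, ← exp_mul, mul_comm]

lemma exp_neg_mul_cosh_eq (z t : ℝ) :
    exp (-z * cosh t) = exp (-(z / 2 * exp t)) * exp (-(z / 2 * exp (-t))) := by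
  rw [← exp_add, cosh_eq]
  ring_nf

lemma exp_neg_mul_cosh_le {z : ℝ} (hz : 0 ≤ z) (t : ℝ) :
    exp (-z * cosh t) ≤ exp (-(z / 2 * exp t)) := by
  rw [exp_neg_mul_cosh_eq]
  exact mul_le_of_le_one_right (exp_pos _).le (exp_le_one_iff.2 (neg_nonpos.2 (by positivity)))

variable {z : ℝ} {g : ℝ → ℝ} {b : ℝ}

lemma exp_neg_mul_cosh_mul_isBigO (hz : 0 < z) (hg : g =O[atTop] fun t => exp (b * t)) :
    (fun t => exp (-z * cosh t) * g t) =O[atTop] fun t => exp (-1 * t) := by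
  have hexp : (fun t => exp (-z * cosh t)) =O[atTop] fun t => exp (-(z / 2 * exp t)) := by
    refine IsBigO.of_bound 1 (Eventually.of_forall fun t => ?_)
    simpa [abs_exp] using exp_neg_mul_cosh_le hz.le t
  refine ((hexp.trans (exp_neg_mul_exp_isBigO (half_pos hz) (b + 1))).mul hg).congr_right
    fun t => ?_
  rw [← exp_add]
  ring_nf

lemma integrableOn_exp_neg_mul_cosh_mul (hz : 0 < z) (hg : Continuous g)
    (hgb : g =O[atTop] fun t => exp (b * t)) :
    IntegrableOn (fun t => exp (-z * cosh t) * g t) (Ioi 0) :=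
  integrable_of_isBigO_exp_neg one_pos (by fun_prop) (exp_neg_mul_cosh_mul_isBigO hz hgb)

lemma tendsto_exp_neg_mul_cosh_mul_atTop (hz : 0 < z) (hgb : g =O[atTop] fun t => exp (b * t)) :
    Tendsto (fun t => exp (-z * cosh t) * g t) atTop (𝓝 0) :=
  (exp_neg_mul_cosh_mul_isBigO hz hgb).trans_tendsto
    (by simpa using tendsto_exp_neg_atTop_nhds_zero)

lemma integrableOn_exp_neg_mul_cosh_mul_cosh (hz : 0 < z) (hb : 0 ≤ b) :
    IntegrableOn (fun t => exp (-z * cosh t) * cosh (b * t)) (Ioi 0) :=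
  integrableOn_exp_neg_mul_cosh_mul hz (by fun_prop) (cosh_mul_isBigO_exp hb)

lemma integrableOn_exp_neg_mul_cosh_mul_cosh_mul_cosh (hz : 0 < z) (hb : 0 ≤ b) :
    IntegrableOn (fun t => exp (-z * cosh t) * (cosh t * cosh (b * t))) (Ioi 0) := by
  refine integrableOn_exp_neg_mul_cosh_mul (b := 1 + b) hz (by fun_prop) ?_
  simpa [add_mul, exp_add] using (cosh_mul_isBigO_exp zero_le_one).mul (cosh_mul_isBigO_exp hb)

lemma integrableOn_exp_neg_mul_cosh_mul_sinh_mul_sinh (hz : 0 < z) (hb : 0 ≤ b) :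
    IntegrableOn (fun t => exp (-z * cosh t) * (sinh t * sinh (b * t))) (Ioi 0) := by
  refine integrableOn_exp_neg_mul_cosh_mul (b := 1 + b) hz (by fun_prop) ?_
  simpa [add_mul, exp_add] using (sinh_mul_isBigO_exp zero_le_one).mul (sinh_mul_isBigO_exp hb)

end Integrability

section BesselK

variable {z : ℝ}

lemma besselK_pos (j : ℕ) (hz : 0 < z) : 0 < besselK j z := by
  have hpos (t : ℝ) : 0 < exp (-z * cosh t) * cosh (j * t) := by positivity
  refine (integral_pos_iff_support_of_nonneg (fun t => (hpos t).le)
    (integrableOn_exp_neg_mul_cosh_mul_cosh hz j.cast_nonneg)).2 ?_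
  rw [Function.support_eq_univ fun t => (hpos t).ne']
  simp

lemma hasDerivAt_besselK (j : ℕ) (hz : 0 < z) :
    HasDerivAt (besselK j) (-∫ t in Ioi 0, exp (-z * cosh t) * (cosh t * cosh (j * t))) z := by
  rw [← integral_neg]
  refine (hasDerivAt_integral_of_dominated_loc_of_deriv_le (s := Ioi (z / 2))
    (F := fun z t => exp (-z * cosh t) * cosh (j * t))
    (F' := fun z t => -(exp (-z * cosh t) * (cosh t * cosh (j * t))))
    (bound := fun t => exp (-(z / 2) * cosh t) * (cosh t * cosh (j * t)))
    (Ioi_mem_nhds (half_lt_self hz))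
    (Eventually.of_forall fun x => Continuous.aestronglyMeasurable (by fun_prop))
    (integrableOn_exp_neg_mul_cosh_mul_cosh hz j.cast_nonneg)
    (Continuous.aestronglyMeasurable (by fun_prop))
    (Eventually.of_forall fun t x hx => ?_)
    (integrableOn_exp_neg_mul_cosh_mul_cosh_mul_cosh (half_pos hz) j.cast_nonneg)
    (Eventually.of_forall fun t x _ => ?_)).2
  · rw [norm_neg, norm_of_nonneg (by positivity)]
    gcongr
    exact (mem_Ioi.1 hx).le
  · refine (((hasDerivAt_neg x).mul_const (cosh t)).exp.mul_const (cosh (j * t))).congr_deriv ?_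
    ring

lemma hasDerivAt_exp_neg_mul_cosh (z t : ℝ) :
    HasDerivAt (fun t => exp (-z * cosh t)) (-(z * (exp (-z * cosh t) * sinh t))) t :=
  ((hasDerivAt_cosh t).const_mul (-z)).exp.congr_deriv (by ring)

lemma natCast_mul_besselK (j : ℕ) (hz : 0 < z) :
    j * besselK j z = z * ∫ t in Ioi 0, exp (-z * cosh t) * (sinh t * sinh (j * t)) := by
  have hderiv (t : ℝ) : HasDerivAt (fun t => exp (-z * cosh t) * sinh (j * t))
      (j * (exp (-z * cosh t) * cosh (j * t)) -
        z * (exp (-z * cosh t) * (sinh t * sinh (j * t)))) t :=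
    ((hasDerivAt_exp_neg_mul_cosh z t).mul ((hasDerivAt_id t).const_mul (j : ℝ)).sinh).congr_deriv
      (by simp only [id]; ring)
  have hcosh := (integrableOn_exp_neg_mul_cosh_mul_cosh hz (b := j) j.cast_nonneg).const_mul (j : ℝ)
  have hsinh :=
    (integrableOn_exp_neg_mul_cosh_mul_sinh_mul_sinh hz (b := j) j.cast_nonneg).const_mul z
  have hparts := integral_Ioi_of_hasDerivAt_of_tendsto' (a := 0) (fun t _ => hderiv t)
    (hcosh.sub hsinh) (tendsto_exp_neg_mul_cosh_mul_atTop hz (sinh_mul_isBigO_exp j.cast_nonneg))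
  rw [integral_sub hcosh hsinh, integral_const_mul, integral_const_mul, mul_zero, sinh_zero,
    mul_zero, sub_zero] at hparts
  exact sub_eq_zero.1 hparts

lemma hasDerivAt_besselK_zero (hz : 0 < z) : HasDerivAt (besselK 0) (-besselK 1 z) z := by
  simpa [besselK] using hasDerivAt_besselK 0 hz

lemma besselK_eq_integral_sub (j : ℕ) (hz : 0 < z) :
    besselK j z = (∫ t in Ioi 0, exp (-z * cosh t) * (cosh t * cosh ((j + 1 : ℕ) * t))) -
      ∫ t in Ioi 0, exp (-z * cosh t) * (sinh t * sinh ((j + 1 : ℕ) * t)) := by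
  rw [← integral_sub
    (integrableOn_exp_neg_mul_cosh_mul_cosh_mul_cosh hz (j + 1).cast_nonneg)
    (integrableOn_exp_neg_mul_cosh_mul_sinh_mul_sinh hz (j + 1).cast_nonneg)]
  refine integral_congr_ae (Eventually.of_forall fun t => ?_)
  have hsub : (j : ℝ) * t = (j + 1 : ℕ) * t - t := by push_cast; ring
  simp only [hsub, cosh_sub]
  ring

lemma hasDerivAt_pow_mul_besselK_succ (j : ℕ) (hz : 0 < z) :
    HasDerivAt (fun z => z ^ (j + 1) * besselK (j + 1) z) (-(z ^ (j + 1) * besselK j z)) z := by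
  refine ((hasDerivAt_pow (j + 1) z).mul (hasDerivAt_besselK (j + 1) hz)).congr_deriv ?_
  rw [besselK_eq_integral_sub j hz, Nat.add_sub_cancel]
  linear_combination z ^ j * natCast_mul_besselK (j + 1) hz

lemma hasDerivAt_mul_besselK_one (hz : 0 < z) :
    HasDerivAt (fun z => z * besselK 1 z) (-(z * besselK 0 z)) z := by
  simpa using hasDerivAt_pow_mul_besselK_succ 0 hz

lemma integrableOn_exp_neg_mul_cosh_mul_sinh (hz : 0 < z) :
    IntegrableOn (fun t => exp (-z * cosh t) * sinh t) (Ioi 0) :=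
  integrableOn_exp_neg_mul_cosh_mul (b := 1) hz continuous_sinh
    (by simpa using sinh_mul_isBigO_exp zero_le_one)

lemma mul_integral_exp_neg_mul_cosh_mul_sinh (hz : 0 < z) :
    z * ∫ t in Ioi 0, exp (-z * cosh t) * sinh t = exp (-z) := by
  have hlim : Tendsto (fun t => exp (-z * cosh t)) atTop (𝓝 0) := by
    simpa using tendsto_exp_neg_mul_cosh_mul_atTop hz (cosh_mul_isBigO_exp le_rfl)
  have h := integral_Ioi_of_hasDerivAt_of_tendsto' (a := 0)
    (fun t _ => hasDerivAt_exp_neg_mul_cosh z t)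
    ((integrableOn_exp_neg_mul_cosh_mul_sinh hz).const_mul z).neg hlim
  rw [integral_neg, integral_const_mul] at h
  simpa using h

lemma mul_besselK_one_eq (hz : 0 < z) :
    z * besselK 1 z = exp (-z) + z * ∫ t in Ioi 0, exp (-z * cosh t) * exp (-t) := by
  rw [← mul_integral_exp_neg_mul_cosh_mul_sinh hz, ← mul_add]
  have hcosh : IntegrableOn (fun t => exp (-z * cosh t) * cosh t) (Ioi 0) := by
    simpa using integrableOn_exp_neg_mul_cosh_mul_cosh hz zero_le_one
  simp_rw [← cosh_sub_sinh, mul_sub]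
  rw [integral_sub hcosh (integrableOn_exp_neg_mul_cosh_mul_sinh hz)]
  simp [besselK]

lemma exp_neg_le_mul_besselK_one (hz : 0 < z) : exp (-z) ≤ z * besselK 1 z := by
  have : 0 ≤ ∫ t in Ioi 0, exp (-z * cosh t) * exp (-t) := integral_nonneg fun t => by positivity
  rw [mul_besselK_one_eq hz]
  exact le_add_of_nonneg_right (by positivity)

lemma mul_besselK_one_le_exp_neg_add (hz : 0 < z) : z * besselK 1 z ≤ exp (-z) + z := by
  have hle : ∫ t in Ioi 0, exp (-z * cosh t) * exp (-t) ≤ ∫ t in Ioi 0, exp (-t) :=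
    integral_mono_of_nonneg (Eventually.of_forall fun t => by positivity)
      (integrableOn_exp_neg_Ioi 0) (Eventually.of_forall fun t =>
        mul_le_of_le_one_left (exp_pos _).le
          (exp_le_one_iff.2 (by rw [neg_mul, neg_nonpos]; positivity)))
  rw [mul_besselK_one_eq hz]
  rw [integral_exp_neg_Ioi_zero] at hle
  gcongr
  exact mul_le_of_le_one_right hz.le hle

lemma tendsto_mul_besselK_one : Tendsto (fun z => z * besselK 1 z) (𝓝[>] 0) (𝓝 1) := by
  have hlower : Tendsto (fun z : ℝ => exp (-z)) (𝓝[>] 0) (𝓝 1) :=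
    tendsto_nhdsWithin_of_tendsto_nhds (Continuous.tendsto' (by fun_prop) _ _ (by simp))
  have hupper : Tendsto (fun z : ℝ => exp (-z) + z) (𝓝[>] 0) (𝓝 1) :=
    tendsto_nhdsWithin_of_tendsto_nhds (Continuous.tendsto' (by fun_prop) _ _ (by simp))
  refine tendsto_of_tendsto_of_tendsto_of_le_of_le' hlower hupper ?_ ?_
  · filter_upwards [self_mem_nhdsWithin] with z hz using exp_neg_le_mul_besselK_one hz
  · filter_upwards [self_mem_nhdsWithin] with z hz using mul_besselK_one_le_exp_neg_add hz

end BesselK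

section ExpIntegral

/-- The exponential integral `E₁(a) = ∫_a^∞ exp (-u) / u du`, meant for `0 < a`; it carries the
logarithmic singularity of `besselK 0` at the origin. -/
noncomputable def expIntegral (a : ℝ) : ℝ :=
  ∫ u in Ioi a, exp (-u) / u

lemma integral_log_mul_exp_neg :
    ∫ u in Ioi 0, log u * exp (-u) = -eulerMascheroniConstant := by
  have hGamma : HasDerivAt Complex.Gamma
      (∫ t : ℝ in Ioi 0, (t : ℂ) ^ ((1 : ℂ) - 1) * (log t * exp (-t))) 1 := by
    refine (Complex.hasDerivAt_GammaIntegral (by simp)).congr_of_eventuallyEq ?_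
    filter_upwards [(isOpen_lt continuous_const Complex.continuous_re).mem_nhds
      (by simp : (0 : ℝ) < (1 : ℂ).re)] with s hs using Complex.Gamma_eq_integral hs
  have h := hGamma.unique Complex.hasDerivAt_Gamma_one
  simp only [sub_self, Complex.cpow_zero, one_mul, ← Complex.ofReal_mul] at h
  rw [integral_complex_ofReal] at h
  exact_mod_cast h

lemma integrableOn_log_mul_exp_neg : IntegrableOn (fun u => log u * exp (-u)) (Ioi 0) := by
  refine Integrable.of_integral_ne_zero ?_
  rw [integral_log_mul_exp_neg, neg_ne_zero]
  exact (one_half_pos.trans one_half_lt_eulerMascheroniConstant).ne'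

lemma tendsto_log_mul_exp_neg_atTop : Tendsto (fun u => log u * exp (-u)) atTop (𝓝 0) :=
  (isLittleO_log_id_atTop.isBigO.mul (isBigO_refl (fun u => exp (-u)) atTop)).trans_tendsto
    (by simpa using tendsto_pow_mul_exp_neg_atTop_nhds_zero 1)

variable {a : ℝ}

lemma integrableOn_exp_neg_div (ha : 0 < a) : IntegrableOn (fun u => exp (-u) / u) (Ioi a) := by
  refine integrable_of_isBigO_exp_neg one_pos (fun u hu => ?_) (IsBigO.of_bound 1 ?_)
  · exact (ContinuousAt.div (by fun_prop) continuousAt_id (ha.trans_le hu).ne').continuousWithinAt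
  · filter_upwards [eventually_ge_atTop 1] with u hu
    rw [norm_of_nonneg (by positivity), norm_of_nonneg (by positivity), neg_one_mul, one_mul]
    exact div_le_self (exp_pos _).le hu

lemma expIntegral_add_log_mul_exp_neg (ha : 0 < a) :
    expIntegral a + log a * exp (-a) = ∫ u in Ioi a, log u * exp (-u) := by
  have hlog := integrableOn_log_mul_exp_neg.mono_set (Ioi_subset_Ioi ha.le)
  have hparts := integral_Ioi_of_hasDerivAt_of_tendsto' (a := a)
    (f := fun u => log u * exp (-u)) (f' := fun u => exp (-u) / u - log u * exp (-u))
    (fun u hu => ((hasDerivAt_log (ha.trans_le hu).ne').mul (hasDerivAt_neg u).exp).congr_deriv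
      (by ring)) ((integrableOn_exp_neg_div ha).sub hlog) tendsto_log_mul_exp_neg_atTop
  rw [integral_sub (integrableOn_exp_neg_div ha) hlog] at hparts
  rw [expIntegral]
  linarith

lemma tendsto_log_mul_one_sub_exp_neg :
    Tendsto (fun a => log a * (1 - exp (-a))) (𝓝[>] 0) (𝓝 0) := by
  have hlog : Tendsto (fun a => log a * a) (𝓝[>] 0) (𝓝 0) := by
    simpa using tendsto_log_mul_rpow_nhdsGT_zero zero_lt_one
  have hexp : (fun a : ℝ => 1 - exp (-a)) =O[𝓝[>] 0] fun a => a := by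
    refine IsBigO.of_bound 1 ?_
    filter_upwards [self_mem_nhdsWithin] with a (ha : 0 < a)
    have hle : exp (-a) ≤ 1 := exp_le_one_iff.2 (by linarith)
    rw [norm_of_nonneg (by linarith), norm_of_nonneg ha.le]
    linarith [add_one_le_exp (-a)]
  exact ((isBigO_refl log _).mul hexp).trans_tendsto hlog

lemma tendsto_expIntegral_add_log :
    Tendsto (fun a => expIntegral a + log a) (𝓝[>] 0) (𝓝 (-eulerMascheroniConstant)) := by
  have htail : Tendsto (fun a => ∫ u in Ioi a, log u * exp (-u)) (𝓝[>] 0)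
      (𝓝 (-eulerMascheroniConstant)) := by
    rw [← integral_log_mul_exp_neg]
    exact (integrableOn_log_mul_exp_neg.continuousWithinAt_Ici_primitive_Ioi).mono_left
      (nhdsWithin_mono _ Ioi_subset_Ici_self)
  refine (add_zero (-eulerMascheroniConstant) ▸
    htail.add tendsto_log_mul_one_sub_exp_neg).congr' ?_
  filter_upwards [self_mem_nhdsWithin] with a ha
  rw [← expIntegral_add_log_mul_exp_neg ha]
  ring

lemma integrableOn_exp_neg_mul_exp (ha : 0 < a) :
    IntegrableOn (fun t => exp (-(a * exp t))) (Ioi 0) :=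
  integrable_of_isBigO_exp_neg one_pos (by fun_prop) (exp_neg_mul_exp_isBigO ha 1)

lemma integral_exp_neg_mul_exp (ha : 0 < a) :
    ∫ t in Ioi 0, exp (-(a * exp t)) = expIntegral a := by
  have hscale := integral_comp_mul_left_Ioi' (fun u => exp (-u) / u) 1 ha
  rw [mul_one, smul_eq_mul, ← integral_const_mul, ← exp_zero,
    ← integral_comp_exp_Ioi (fun y => a * (exp (-(a * y)) / (a * y)))] at hscale
  rw [expIntegral, ← hscale]
  refine integral_congr_ae (Eventually.of_forall fun t => ?_)
  simp only [smul_eq_mul]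
  field_simp

end ExpIntegral

section SmallArgument

variable {z : ℝ}

lemma besselK_zero_le_expIntegral (hz : 0 < z) : besselK 0 z ≤ expIntegral (z / 2) := by
  rw [← integral_exp_neg_mul_exp (half_pos hz)]
  refine integral_mono (integrableOn_exp_neg_mul_cosh_mul_cosh hz (Nat.cast_nonneg 0))
    (integrableOn_exp_neg_mul_exp (half_pos hz)) fun t => ?_
  simpa using exp_neg_mul_cosh_le hz.le t

lemma expIntegral_sub_le_besselK_zero (hz : 0 < z) :
    expIntegral (z / 2) - z / 2 ≤ besselK 0 z := by
  have hexp := integrableOn_exp_neg_mul_exp (half_pos hz)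
  have hlin := (integrableOn_exp_neg_Ioi 0).const_mul (z / 2)
  have hpointwise (t : ℝ) :
      exp (-(z / 2 * exp t)) - z / 2 * exp (-t) ≤ exp (-z * cosh t) * cosh ((0 : ℕ) * t) := by
    have hle_one : exp (-(z / 2 * exp t)) ≤ 1 := exp_le_one_iff.2 (neg_nonpos.2 (by positivity))
    have hlower := add_one_le_exp (-(z / 2 * exp (-t)))
    have hfactor : 0 ≤ z / 2 * exp (-t) := by positivity
    rw [Nat.cast_zero, zero_mul, cosh_zero, mul_one, exp_neg_mul_cosh_eq]
    nlinarith [exp_pos (-(z / 2 * exp t))]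
  calc expIntegral (z / 2) - z / 2
      = ∫ t in Ioi 0, (exp (-(z / 2 * exp t)) - z / 2 * exp (-t)) := by
        rw [integral_sub hexp hlin, integral_const_mul, integral_exp_neg_Ioi_zero, mul_one,
          integral_exp_neg_mul_exp (half_pos hz)]
    _ ≤ besselK 0 z := integral_mono (hexp.sub hlin)
        (integrableOn_exp_neg_mul_cosh_mul_cosh hz (Nat.cast_nonneg 0)) hpointwise

/-- The leading term `L(z) = -(log (z / 2) + γ)` of `K₀(z)` as `z → 0⁺`; the slender-body
approximation replaces `z K₁(z) / K₀(z)` by `1 / L(z)`. -/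
noncomputable def besselKZeroApprox (z : ℝ) : ℝ :=
  -(log (z / 2) + eulerMascheroniConstant)

lemma hasDerivAt_besselKZeroApprox (hz : z ≠ 0) : HasDerivAt besselKZeroApprox (-z⁻¹) z := by
  refine ((((hasDerivAt_id z).div_const 2).log (div_ne_zero hz two_ne_zero)).add_const
    eulerMascheroniConstant).neg.congr_deriv ?_
  simp only [id]
  field_simp

lemma antitoneOn_besselKZeroApprox : AntitoneOn besselKZeroApprox (Ioi 0) :=
  fun x (hx : 0 < x) y _ hxy => neg_le_neg (by gcongr)

lemma besselKZeroApprox_pos_iff (hz : 0 < z) :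
    0 < besselKZeroApprox z ↔ z < 2 * exp (-eulerMascheroniConstant) := by
  rw [besselKZeroApprox, neg_pos, ← lt_neg_iff_add_neg, log_lt_iff_lt_exp (half_pos hz),
    div_lt_iff₀' two_pos]

lemma hasDerivAt_besselK_zero_sub_approx (hz : 0 < z) :
    HasDerivAt (fun z => besselK 0 z - besselKZeroApprox z) ((1 - z * besselK 1 z) / z) z := by
  refine ((hasDerivAt_besselK_zero hz).sub (hasDerivAt_besselKZeroApprox hz.ne')).congr_deriv ?_
  field_simp
  ring

lemma tendsto_besselK_zero_sub_approx :
    Tendsto (fun z => besselK 0 z - besselKZeroApprox z) (𝓝[>] 0) (𝓝 0) := by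
  have hhalf : Tendsto (fun z : ℝ => z / 2) (𝓝[>] 0) (𝓝[>] 0) := by
    refine tendsto_nhdsWithin_iff.2 ⟨tendsto_nhdsWithin_of_tendsto_nhds
      (Continuous.tendsto' (by fun_prop) _ _ (by simp)), ?_⟩
    filter_upwards [self_mem_nhdsWithin] with z hz using half_pos (mem_Ioi.1 hz)
  have hupper : Tendsto
      (fun z => expIntegral (z / 2) + log (z / 2) + eulerMascheroniConstant) (𝓝[>] 0) (𝓝 0) := by
    simpa using (tendsto_expIntegral_add_log.comp hhalf).add_const eulerMascheroniConstant
  have hlower : Tendsto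
      (fun z => expIntegral (z / 2) + log (z / 2) + eulerMascheroniConstant - z / 2)
      (𝓝[>] 0) (𝓝 0) := by
    simpa using hupper.sub (hhalf.mono_right nhdsWithin_le_nhds)
  refine tendsto_of_tendsto_of_tendsto_of_le_of_le' hlower hupper ?_ ?_
  · filter_upwards [self_mem_nhdsWithin] with z hz
    rw [besselKZeroApprox]
    linarith [expIntegral_sub_le_besselK_zero hz]
  · filter_upwards [self_mem_nhdsWithin] with z hz
    rw [besselKZeroApprox]
    linarith [besselK_zero_le_expIntegral hz]

lemma mul_besselK_one_le_one (hz : 0 < z) : z * besselK 1 z ≤ 1 := by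
  refine neg_le_neg_iff.1 (le_of_hasDerivAt_nonneg_of_tendsto_nhdsGT
    (f := fun x => -(x * besselK 1 x)) hz
    (fun x hx => (hasDerivAt_mul_besselK_one hx.1).neg) (fun x hx => ?_)
    tendsto_mul_besselK_one.neg)
  rw [neg_neg]
  exact (mul_pos hx.1 (besselK_pos 0 hx.1)).le

lemma besselKZeroApprox_le_besselK_zero (hz : 0 < z) : besselKZeroApprox z ≤ besselK 0 z :=
  sub_nonneg.1 (le_of_hasDerivAt_nonneg_of_tendsto_nhdsGT
    (f := fun x => besselK 0 x - besselKZeroApprox x) hz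
    (fun _ hx => hasDerivAt_besselK_zero_sub_approx hx.1)
    (fun _ hx => div_nonneg (sub_nonneg.2 (mul_besselK_one_le_one hx.1)) hx.1.le)
    tendsto_besselK_zero_sub_approx)

lemma besselK_zero_le_approx_add_self (hz : 0 < z) : besselK 0 z ≤ besselKZeroApprox z + z := by
  have hlim : Tendsto (fun x => x - (besselK 0 x - besselKZeroApprox x)) (𝓝[>] 0) (𝓝 0) := by
    simpa using (tendsto_id.mono_left nhdsWithin_le_nhds).sub tendsto_besselK_zero_sub_approx
  have hnonneg : 0 ≤ z - (besselK 0 z - besselKZeroApprox z) := by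
    refine le_of_hasDerivAt_nonneg_of_tendsto_nhdsGT
      (f := fun x => x - (besselK 0 x - besselKZeroApprox x)) hz
      (fun x hx => (hasDerivAt_id x).sub (hasDerivAt_besselK_zero_sub_approx hx.1))
      (fun x hx => sub_nonneg.2 ((div_le_one hx.1).2 ?_)) hlim
    linarith [add_one_le_exp (-x), exp_neg_le_mul_besselK_one hx.1]
  linarith

lemma hasDerivAt_sq_mul_besselKZeroApprox_add (a b c : ℝ) (hz : z ≠ 0) :
    HasDerivAt (fun x => x ^ 2 * (a * besselKZeroApprox x + b + c * x))
      (z * (2 * a * besselKZeroApprox z + (2 * b - a) + 3 * c * z)) z := by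
  have hfactor : HasDerivAt (fun x => a * besselKZeroApprox x + b + c * x)
      (a * -z⁻¹ + c * 1) z :=
    (((hasDerivAt_besselKZeroApprox hz).const_mul a).add_const b).add
      ((hasDerivAt_id z).const_mul c)
  refine ((hasDerivAt_pow 2 z).mul hfactor).congr_deriv ?_
  field_simp
  ring

lemma tendsto_sq_mul_besselKZeroApprox_add (a b c : ℝ) :
    Tendsto (fun x => x ^ 2 * (a * besselKZeroApprox x + b + c * x)) (𝓝[>] 0) (𝓝 0) := by
  have hlog : Tendsto (fun x => log x * x ^ 2) (𝓝[>] 0) (𝓝 0) := by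
    simpa using tendsto_log_mul_rpow_nhdsGT_zero two_pos
  have hpoly : Tendsto
      (fun x : ℝ => x ^ 2 * (a * (log 2 - eulerMascheroniConstant) + b + c * x)) (𝓝[>] 0) (𝓝 0) :=
    tendsto_nhdsWithin_of_tendsto_nhds (Continuous.tendsto' (by fun_prop) _ _ (by simp))
  have hsub := hpoly.sub (hlog.const_mul a)
  rw [mul_zero, sub_zero] at hsub
  refine hsub.congr' ?_
  filter_upwards [self_mem_nhdsWithin] with x (hx : 0 < x)
  rw [besselKZeroApprox, log_div hx.ne' two_ne_zero]
  ring

-- The error term is `∫₀ᶻ x (L(x) + x) dx`.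
lemma one_sub_le_mul_besselK_one (hz : 0 < z) :
    1 - z ^ 2 * (1 / 2 * besselKZeroApprox z + 1 / 4 + 1 / 3 * z) ≤ z * besselK 1 z := by
  refine sub_le_iff_le_add.2 (le_of_hasDerivAt_nonneg_of_tendsto_nhdsGT hz
    (f := fun x => x * besselK 1 x + x ^ 2 * (1 / 2 * besselKZeroApprox x + 1 / 4 + 1 / 3 * x))
    (fun x hx => (hasDerivAt_mul_besselK_one hx.1).add
      (hasDerivAt_sq_mul_besselKZeroApprox_add (1 / 2) (1 / 4) (1 / 3) hx.1.ne'))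
    (fun x hx => ?_) (by
      simpa only [add_zero] using
        tendsto_mul_besselK_one.add (tendsto_sq_mul_besselKZeroApprox_add (1 / 2) (1 / 4) (1 / 3))))
  have := mul_le_mul_of_nonneg_left (besselK_zero_le_approx_add_self hx.1) hx.1.le
  linarith

-- The error term is `∫₀ᶻ x (L(x) / 2 + 1 / 4 + x / 3) dx`.
lemma besselK_zero_le_approx_add_sq_mul (hz : 0 < z) :
    besselK 0 z ≤
      besselKZeroApprox z + z ^ 2 * (1 / 4 * besselKZeroApprox z + 1 / 4 + 1 / 9 * z) := by
  have hlim := (tendsto_sq_mul_besselKZeroApprox_add (1 / 4) (1 / 4) (1 / 9)).sub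
    tendsto_besselK_zero_sub_approx
  rw [sub_zero] at hlim
  have hnonneg : 0 ≤ z ^ 2 * (1 / 4 * besselKZeroApprox z + 1 / 4 + 1 / 9 * z) -
      (besselK 0 z - besselKZeroApprox z) := by
    refine le_of_hasDerivAt_nonneg_of_tendsto_nhdsGT (f := fun x =>
        x ^ 2 * (1 / 4 * besselKZeroApprox x + 1 / 4 + 1 / 9 * x) -
          (besselK 0 x - besselKZeroApprox x)) hz
      (fun x hx => (hasDerivAt_sq_mul_besselKZeroApprox_add (1 / 4) (1 / 4) (1 / 9) hx.1.ne').sub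
        (hasDerivAt_besselK_zero_sub_approx hx.1))
      (fun x hx => sub_nonneg.2 ((div_le_iff₀ hx.1).2 ?_)) hlim
    linarith [one_sub_le_mul_besselK_one hx.1]
  linarith

lemma besselK_zero_sub_approx_mul_le (hz : 0 < z) (hL : 0 < besselKZeroApprox z) :
    besselK 0 z - besselKZeroApprox z * (z * besselK 1 z) ≤
      z ^ 2 * (besselKZeroApprox z + 1) ^ 2 := by
  have hz_lt : z < 2 :=
    ((besselKZeroApprox_pos_iff hz).1 hL).trans_le <| mul_le_of_le_one_right zero_le_two <|
      exp_le_one_iff.2 (by linarith [one_half_lt_eulerMascheroniConstant])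
  have hK₁ := mul_le_mul_of_nonneg_left (one_sub_le_mul_besselK_one hz) hL.le
  have hK₀ := besselK_zero_le_approx_add_sq_mul hz
  set L := besselKZeroApprox z
  calc besselK 0 z - L * (z * besselK 1 z)
      ≤ z ^ 2 * (1 / 4 * L + 1 / 4 + 1 / 9 * z + L * (1 / 2 * L + 1 / 4 + 1 / 3 * z)) := by
        linarith
    _ ≤ z ^ 2 * (L + 1) ^ 2 := by
        gcongr
        nlinarith

lemma abs_mul_besselK_div_sub_inv_le (hz : 0 < z) (hL : 0 < besselKZeroApprox z) :
    |z * (besselK 1 z / besselK 0 z) - (besselKZeroApprox z)⁻¹| ≤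
      z ^ 2 * (1 + (besselKZeroApprox z)⁻¹) ^ 2 := by
  have hupper := besselK_zero_sub_approx_mul_le hz hL
  have hLK := besselKZeroApprox_le_besselK_zero hz
  have hnonneg : 0 ≤ besselK 0 z - besselKZeroApprox z * (z * besselK 1 z) :=
    sub_nonneg.2 ((mul_le_of_le_one_right hL.le (mul_besselK_one_le_one hz)).trans hLK)
  have hK := besselK_pos 0 hz
  set L := besselKZeroApprox z
  calc |z * (besselK 1 z / besselK 0 z) - L⁻¹|
      = |-((besselK 0 z - L * (z * besselK 1 z)) / (L * besselK 0 z))| := by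
        congr 1
        field_simp
        ring
    _ = (besselK 0 z - L * (z * besselK 1 z)) / (L * besselK 0 z) := by
        rw [abs_neg, abs_of_nonneg (by positivity)]
    _ ≤ z ^ 2 * (L + 1) ^ 2 / (L * L) := by gcongr
    _ = z ^ 2 * (1 + L⁻¹) ^ 2 := by field_simp

end SmallArgument

theorem laplace_eigenvalue_difference_general {r : ℝ} (hr₀ : 0 < r)
    (hr : r < 2 * exp (-eulerMascheroniConstant)) :
    ∃ C : ℝ, 0 < C ∧ ∀ ε : ℝ, 0 < ε → ∀ k : ℝ, 0 < k → π * ε * k ≤ r →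
      |2 * π ^ 2 * ε * k * (besselK 1 (π * ε * k) / besselK 0 (π * ε * k)) -
          -(2 * π) / (log (π * ε * k / 2) + eulerMascheroniConstant)| ≤
        C * ε ^ 2 * k ^ 2 := by
  have hLr : 0 < besselKZeroApprox r := (besselKZeroApprox_pos_iff hr₀).2 hr
  refine ⟨2 * π ^ 3 * (1 + (besselKZeroApprox r)⁻¹) ^ 2, by positivity, fun ε hε k hk hle => ?_⟩
  have hz : 0 < π * ε * k := by positivity
  have hLz : besselKZeroApprox r ≤ besselKZeroApprox (π * ε * k) :=
    antitoneOn_besselKZeroApprox hz hr₀ hle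
  have hL : 0 < besselKZeroApprox (π * ε * k) := hLr.trans_le hLz
  calc |2 * π ^ 2 * ε * k * (besselK 1 (π * ε * k) / besselK 0 (π * ε * k)) -
          -(2 * π) / (log (π * ε * k / 2) + eulerMascheroniConstant)|
      = 2 * π * |π * ε * k * (besselK 1 (π * ε * k) / besselK 0 (π * ε * k)) -
          (besselKZeroApprox (π * ε * k))⁻¹| := by
        rw [← abs_of_pos two_pi_pos, ← abs_mul, abs_of_pos two_pi_pos, besselKZeroApprox, inv_neg]
        congr 1
        ring
    _ ≤ 2 * π * ((π * ε * k) ^ 2 * (1 + (besselKZeroApprox (π * ε * k))⁻¹) ^ 2) := by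
        gcongr
        exact abs_mul_besselK_div_sub_inv_le hz hL
    _ ≤ 2 * π * ((π * ε * k) ^ 2 * (1 + (besselKZeroApprox r)⁻¹) ^ 2) := by gcongr
    _ = 2 * π ^ 3 * (1 + (besselKZeroApprox r)⁻¹) ^ 2 * ε ^ 2 * k ^ 2 := by ring

theorem laplace_eigenvalue_difference :
    ∃ C : ℝ, 0 < C ∧ ∀ ε : ℝ, 0 < ε → ∀ k : ℕ, 1 ≤ k → π * ε * (k : ℝ) ≤ 9 / 20 →
      |2 * π ^ 2 * ε * (k : ℝ) *
            (besselK 1 (π * ε * (k : ℝ)) / besselK 0 (π * ε * (k : ℝ))) -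
          -(2 * π) / (Real.log (π * ε * (k : ℝ) / 2) + Real.eulerMascheroniConstant)| ≤
        C * ε ^ 2 * (k : ℝ) ^ 2 := by
  have hr : (9 / 20 : ℝ) < 2 * exp (-eulerMascheroniConstant) := by
    linarith [add_one_le_exp (-eulerMascheroniConstant), eulerMascheroniConstant_lt_two_thirds]
  obtain ⟨C, hC, hbound⟩ := laplace_eigenvalue_difference_general (by norm_num) hr
  exact ⟨C, hC, fun ε hε k hk => hbound ε hε k (by exact_mod_cast hk)⟩
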